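/- Let L be an algebraically closed field of characteristic 0, let n > 1, let D = Σ_{i=1}^m (e_i − 1)·Q_i be an effective divisor on P¹_L with distinct points Q₁, …, Q_m, m ≥ 3, and each e_i ≥ 2, and let P₁, …, P_m be points of P¹(L) (not necessarily distinct). Then there are only finitely many morphisms φ: P¹_L → P¹_L of degree n such that the ramification divisor of φ equals D and φ(Q_i) = P_i for all i = 1, …, m. -/

import Mathlib

/-!
Statement 9.  Let `L` be algebraically closed of characteristic `0`, `n > 1`, and let
`D = Σᵢ (eᵢ − 1)·Qᵢ` be an effective divisor on `ℙ¹_L` with distinct points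
`Q₁, …, Q_m` (`m ≥ 3`, written in coordinates `Qᵢ = [aᵢ : bᵢ]`) and `eᵢ ≥ 2`, and let
`P₁, …, P_m = [cᵢ : dᵢ]` be (not necessarily distinct) points of `ℙ¹(L)`.  There are
only finitely many morphisms `φ : ℙ¹_L → ℙ¹_L` of degree `n` with ramification
divisor `D` and `φ(Qᵢ) = Pᵢ` for all `i`.

A morphism of degree `n` is encoded by a pair of homogeneous binary forms `(P, Q)` of
degree `n` with no common projective zero (pairs are unique up to a scalar).  The
ramification divisor of `[P : Q]` is the divisor of zeros of the homogeneous
Wronskian, so `R_φ = D` is encoded by `W = k·∏ᵢ (bᵢ·X − aᵢ·Y)^(eᵢ−1)` for a unit `k`;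
`φ(Qᵢ) = Pᵢ` is encoded by the vanishing of the cross product
`dᵢ·P(aᵢ,bᵢ) − cᵢ·Q(aᵢ,bᵢ)`.
-/

noncomputable section

namespace CGR

variable {F : Type*} [Field F]

/-- The homogeneous Wronskian of a pair of binary forms. -/
def wronskian (P Q : MvPolynomial (Fin 2) F) : MvPolynomial (Fin 2) F :=
  MvPolynomial.pderiv 0 P * MvPolynomial.pderiv 1 Q -
    MvPolynomial.pderiv 1 P * MvPolynomial.pderiv 0 Q

/-- The binary forms `P, Q` have no common projective root. -/
def NoCommonRoot (P Q : MvPolynomial (Fin 2) F) : Prop :=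
  ∀ u : Fin 2 → F, MvPolynomial.eval u P = 0 → MvPolynomial.eval u Q = 0 → u = 0

end CGR

open CGR

/-!
There is in fact at most one such map. Let `ℓ` be the linear form vanishing at `Qᵢ`, and let
`f = dᵢ P - cᵢ Q`, which vanishes at `Qᵢ` because `φ(Qᵢ) = Pᵢ`. The form `ℓ ^ (eᵢ - 1)` divides
`W(P, Q)`, hence also `W(f, g)`, where `g` is one of `P`, `Q` not vanishing at `Qᵢ`. If
`f = ℓ ^ (j + 1) q`, then `W(f, g) ≡ (j + 1) ℓ ^ j q W(ℓ, g)` modulo `ℓ ^ (j + 1)`, and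
`W(ℓ, g)(Qᵢ) = n g(Qᵢ)` by Euler's identity. As `j + 1 ≤ n`, both integers `j + 1` and `n` are
nonzero in a field where `n !` is; so `ℓ` divides `q`, and inductively `ℓ ^ eᵢ` divides `f`.

For two such maps `[P : Q]` and `[P' : Q']`, the form `P Q' - P' Q` is therefore divisible by the
product of the `ℓ ^ eᵢ` over all `i`, whose degree is `(2n - 2) + m > 2n`. Hence `P Q' = P' Q`.
Finally `P` and `Q` are coprime: an irreducible common factor would divide `W(P, Q)`, so it would
be one of the linear forms, and `P`, `Q` would have a common root. So the two maps agree.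
-/

namespace CGR

open MvPolynomial

section IsRelPrime

variable {M : Type*} [CommMonoidWithZero M] [IsCancelMulZero M] [DecompositionMonoid M]

theorem exists_units_mul_eq_of_mul_eq_mul {p q p' q' : M} (h : IsRelPrime p q)
    (h' : IsRelPrime p' q') (heq : p * q' = p' * q) : ∃ u : Mˣ, p * u = p' ∧ q * u = q' := by
  have hp : Associated p p' := associated_of_dvd_dvd
    (h.dvd_of_dvd_mul_right ⟨q', heq.symm⟩) (h'.dvd_of_dvd_mul_right ⟨q, heq⟩)
  have hq : Associated q q' := associated_of_dvd_dvd
    (h.symm.dvd_of_dvd_mul_left ⟨p', by rw [heq, mul_comm]⟩)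
    (h'.symm.dvd_of_dvd_mul_left ⟨p, by rw [← heq, mul_comm]⟩)
  obtain ⟨u, rfl⟩ := hp
  rcases eq_or_ne p 0 with rfl | hp0
  · obtain ⟨v, rfl⟩ := hq
    exact ⟨v, by simp only [zero_mul], rfl⟩
  · refine ⟨u, rfl, mul_left_cancel₀ hp0 ?_⟩
    rw [heq, mul_assoc, mul_comm q]

end IsRelPrime

theorem dvd_mul_sub_mul_of_dvd_sub {A : Type*} [CommRing A] {c d x p q p' q' : A}
    (hcd : IsUnit c ∨ IsUnit d) (h : x ∣ d * p - c * q) (h' : x ∣ d * p' - c * q') :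
    x ∣ p * q' - p' * q := by
  rcases hcd with hc | hd
  · rw [← hc.dvd_mul_left]
    convert (h.mul_left p').sub (h'.mul_left p) using 1
    ring
  · rw [← hd.dvd_mul_left]
    convert (h.mul_left q').sub (h'.mul_left q) using 1
    ring

theorem aeval_smul_of_isHomogeneous {σ R A : Type*} [CommSemiring R] [CommSemiring A] [Algebra R A]
    {f : MvPolynomial σ R} {n : ℕ} (hf : f.IsHomogeneous n) (t : A) (v : σ → A) :
    aeval (t • v) f = t ^ n * aeval v f := by
  simp only [aeval_def, eval₂_eq, Finset.mul_sum]
  refine Finset.sum_congr rfl fun x hx => ?_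
  simp only [hf.degree_eq_sum_deg_support hx, Pi.smul_apply, smul_eq_mul, mul_pow,
    Finset.prod_mul_distrib, Finset.prod_pow_eq_pow_sum]
  ring

theorem dvd_aeval_sub_aeval {σ R A : Type*} [CommSemiring R] [CommRing A] [Algebra R A]
    {d : A} {v w : σ → A} (h : ∀ i, d ∣ v i - w i) (f : MvPolynomial σ R) :
    d ∣ aeval v f - aeval w f := by
  let π := Ideal.Quotient.mkₐ R (Ideal.span {d})
  have hπ (x y : A) : d ∣ x - y ↔ π x = π y := by
    rw [← Ideal.mem_span_singleton]
    exact Ideal.Quotient.eq.symm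
  rw [hπ, comp_aeval_apply, comp_aeval_apply]
  simp only [(hπ _ _).1 (h _)]

theorem dvd_of_dvd_C_mul_X_sub_C_mul_X {σ R : Type*} [CommRing R] {f p : MvPolynomial σ R} {n : ℕ}
    {v : σ → R} {i : σ} (hf : f.IsHomogeneous n) (hv : eval v f = 0) (hi : IsUnit (v i))
    (hp : ∀ j, p ∣ C (v i) * X j - C (v j) * X i) : p ∣ f := by
  -- Modulo `p`, the vector `X` is proportional to `v`.
  have hprop (j : σ) : p ∣ ((C (v i) : MvPolynomial σ R) • (X : σ → MvPolynomial σ R)) j -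
      ((X i : MvPolynomial σ R) • (C ∘ v : σ → MvPolynomial σ R)) j := by
    simpa only [Pi.smul_apply, smul_eq_mul, Function.comp_apply, mul_comm (X i)] using hp j
  have hC : aeval (C ∘ v : σ → MvPolynomial σ R) f = 0 := by
    have hcomp := aeval_algebraMap_apply (MvPolynomial σ R) v f
    rwa [aeval_eq_eval, hv, map_zero] at hcomp
  have hdvd := dvd_aeval_sub_aeval hprop f
  rw [aeval_smul_of_isHomogeneous hf, aeval_smul_of_isHomogeneous hf, hC, mul_zero, sub_zero,
    aeval_X_left_apply, ← C_pow] at hdvd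
  exact ((hi.pow n).map C).dvd_mul_left.1 hdvd

theorem exists_units_smul_eq_of_mul_eq_mul {σ R : Type*} [CommRing R] [IsDomain R]
    [UniqueFactorizationMonoid R] {P Q P' Q' : MvPolynomial σ R} (h : IsRelPrime P Q)
    (h' : IsRelPrime P' Q') (heq : P * Q' = P' * Q) :
    ∃ k : Rˣ, P' = (k : R) • P ∧ Q' = (k : R) • Q := by
  obtain ⟨u, rfl, rfl⟩ := exists_units_mul_eq_of_mul_eq_mul h h' heq
  obtain ⟨k, hk, huk⟩ := isUnit_iff_eq_C_of_isReduced.1 u.isUnit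
  exact ⟨hk.unit, by simp [huk, smul_eq_C_mul, mul_comm], by simp [huk, smul_eq_C_mul, mul_comm]⟩

theorem natCast_ne_zero_of_natCast_factorial_ne_zero {R : Type*} [CommSemiring R] {n j : ℕ}
    (hn : (n.factorial : R) ≠ 0) (hj : 0 < j) (hjn : j ≤ n) : (j : R) ≠ 0 := fun h0 =>
  hn (zero_dvd_iff.1 (h0 ▸ Nat.cast_dvd_cast (Nat.dvd_factorial hj hjn)))

/-- The linear form `b X₀ - a X₁`, whose divisor of zeros on the projective line is the point
`[a : b]` (when `a`, `b` are not both zero). -/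
def linearForm {R : Type*} [CommRing R] (a b : R) : MvPolynomial (Fin 2) R :=
  C b * X 0 - C a * X 1

section CommRing

variable {R : Type*} [CommRing R] {a b : R}

theorem eval_linearForm (a b x y : R) : eval ![x, y] (linearForm a b) = b * x - a * y := by
  simp [linearForm]

theorem isHomogeneous_linearForm (a b : R) : (linearForm a b).IsHomogeneous 1 :=
  (isHomogeneous_C_mul_X b 0).sub (isHomogeneous_C_mul_X a 1)

theorem linearForm_ne_zero (hab : ¬(a = 0 ∧ b = 0)) : linearForm a b ≠ 0 := by
  intro h
  have hb := eval_linearForm a b 1 0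
  have ha := eval_linearForm a b 0 1
  simp only [h, map_zero, mul_one, mul_zero, zero_sub, sub_zero] at ha hb
  exact hab ⟨neg_eq_zero.1 ha.symm, hb.symm⟩

theorem eval_eq_zero_of_linearForm_dvd {f : MvPolynomial (Fin 2) R}
    (h : linearForm a b ∣ f) : eval ![a, b] f = 0 := by
  obtain ⟨g, rfl⟩ := h
  rw [map_mul, eval_linearForm, mul_comm b, sub_self, zero_mul]

end CommRing

variable {F : Type*} [Field F] {n : ℕ}

section Field

variable {a b : F} {f : MvPolynomial (Fin 2) F}

theorem prime_linearForm (hab : ¬(a = 0 ∧ b = 0)) : Prime (linearForm a b) := by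
  have hdeg := (isHomogeneous_linearForm a b).totalDegree (linearForm_ne_zero hab)
  refine (irreducible_of_totalDegree_eq_one hdeg fun x hx => ?_).prime
  refine IsUnit.mk0 x ?_
  rintro rfl
  exact linearForm_ne_zero hab (MvPolynomial.ext _ _ fun d => zero_dvd_iff.1 (hx d))

theorem linearForm_dvd_of_eval_eq_zero (hab : ¬(a = 0 ∧ b = 0)) (hf : f.IsHomogeneous n)
    (h : eval ![a, b] f = 0) : linearForm a b ∣ f := by
  rcases not_and_or.1 hab with ha | hb
  · refine dvd_of_dvd_C_mul_X_sub_C_mul_X hf h (i := 0) (IsUnit.mk0 _ ha)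
      (Fin.forall_fin_two.2 ⟨⟨0, ?_⟩, ⟨-1, ?_⟩⟩) <;> simp [linearForm]
  · refine dvd_of_dvd_C_mul_X_sub_C_mul_X hf h (i := 1) (IsUnit.mk0 _ hb)
      (Fin.forall_fin_two.2 ⟨⟨1, ?_⟩, ⟨0, ?_⟩⟩) <;> simp [linearForm]

theorem isRelPrime_linearForm {a' b' : F} (hab : ¬(a = 0 ∧ b = 0)) (h : a * b' - a' * b ≠ 0) :
    IsRelPrime (linearForm a b) (linearForm a' b') := by
  rw [(prime_linearForm hab).irreducible.isRelPrime_iff_not_dvd]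
  intro hdvd
  apply h
  rw [← eval_eq_zero_of_linearForm_dvd hdvd, eval_linearForm]
  ring

end Field

section Wronskian

variable {a b : F} {f g P Q : MvPolynomial (Fin 2) F}

theorem wronskian_mul_left (p f g : MvPolynomial (Fin 2) F) :
    wronskian (p * f) g = p * wronskian f g + f * wronskian p g := by
  simp only [wronskian, Derivation.leibniz, smul_eq_mul]
  ring

theorem wronskian_pow_left (f g : MvPolynomial (Fin 2) F) (j : ℕ) :
    wronskian (f ^ (j + 1)) g = (j + 1) * f ^ j * wronskian f g := by
  simp only [wronskian, Derivation.leibniz_pow, smul_eq_mul, nsmul_eq_mul, Nat.add_sub_cancel]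
  push_cast
  ring

theorem wronskian_pow_mul_left (p f g : MvPolynomial (Fin 2) F) (j : ℕ) :
    wronskian (p ^ (j + 1) * f) g =
      p ^ j * (p * wronskian f g + f * ((j + 1) * wronskian p g)) := by
  rw [wronskian_mul_left, wronskian_pow_left]
  ring

theorem dvd_wronskian {p : MvPolynomial (Fin 2) F} (hP : p ∣ P) (hQ : p ∣ Q) :
    p ∣ wronskian P Q := by
  obtain ⟨P, rfl⟩ := hP
  obtain ⟨Q, rfl⟩ := hQ
  have hpQ : wronskian p (p * Q) = p * wronskian p Q := by
    simp only [wronskian, Derivation.leibniz, smul_eq_mul]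
    ring
  rw [wronskian_mul_left, hpQ]
  exact (dvd_mul_right _ _).add ((dvd_mul_right _ _).mul_left _)

theorem isHomogeneous_wronskian {m : ℕ} (hP : P.IsHomogeneous m) (hQ : Q.IsHomogeneous n) :
    (wronskian P Q).IsHomogeneous ((m - 1) + (n - 1)) :=
  (hP.pderiv.mul hQ.pderiv).sub (hP.pderiv.mul hQ.pderiv)

theorem eval_wronskian_linearForm_left (hg : g.IsHomogeneous n) (a b : F) :
    eval ![a, b] (wronskian (linearForm a b) g) = n * eval ![a, b] g := by
  have euler := congrArg (eval ![a, b]) hg.sum_X_mul_pderiv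
  simp only [Fin.sum_univ_two, map_add, map_mul, eval_X, nsmul_eq_mul, map_natCast,
    Matrix.cons_val_zero, Matrix.cons_val_one] at euler
  simp only [wronskian, linearForm, map_sub, map_mul, pderiv_C_mul, pderiv_X, eval_C]
  simp [← euler, add_comm]

theorem linearForm_pow_succ_dvd_of_pow_dvd_wronskian {r : ℕ} (hn : (n.factorial : F) ≠ 0)
    (hab : ¬(a = 0 ∧ b = 0)) (hf : f.totalDegree ≤ n) (hg : g.IsHomogeneous n)
    (hfab : linearForm a b ∣ f) (hgab : eval ![a, b] g ≠ 0)
    (hW : linearForm a b ^ r ∣ wronskian f g) : linearForm a b ^ (r + 1) ∣ f := by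
  rcases eq_or_ne f 0 with rfl | hf0
  · exact dvd_zero _
  induction r with
  | zero => simpa using hfab
  | succ j ih =>
    obtain ⟨q, rfl⟩ := ih ((pow_dvd_pow _ j.le_succ).trans hW)
    have hjn : j + 1 ≤ n := by
      have hle := totalDegree_le_of_dvd_of_isDomain (dvd_mul_right (linearForm a b ^ (j + 1)) q) hf0
      rw [((isHomogeneous_linearForm a b).pow (j + 1)).totalDegree
        (pow_ne_zero _ (linearForm_ne_zero hab)), one_mul] at hle
      exact hle.trans hf
    rw [wronskian_pow_mul_left, pow_succ,
      mul_dvd_mul_iff_left (pow_ne_zero _ (linearForm_ne_zero hab)),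
      dvd_add_right (dvd_mul_right _ _)] at hW
    have hnot : ¬linearForm a b ∣ (j + 1) * wronskian (linearForm a b) g := fun hdvd => by
      have heval := eval_eq_zero_of_linearForm_dvd hdvd
      rw [map_mul, eval_wronskian_linearForm_left hg] at heval
      have hj0 := natCast_ne_zero_of_natCast_factorial_ne_zero hn j.succ_pos hjn
      have hn0 := natCast_ne_zero_of_natCast_factorial_ne_zero hn (j.succ_pos.trans_le hjn) le_rfl
      exact mul_ne_zero hj0 (mul_ne_zero hn0 hgab) (by simpa using heval)
    rw [pow_succ _ (j + 1)]
    exact mul_dvd_mul_left _ (((prime_linearForm hab).dvd_or_dvd hW).resolve_right hnot)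

theorem NoCommonRoot.not_eval_eq_zero (h : NoCommonRoot P Q) (hab : ¬(a = 0 ∧ b = 0)) :
    ¬(eval ![a, b] P = 0 ∧ eval ![a, b] Q = 0) := fun ⟨hP, hQ⟩ =>
  hab ⟨congrFun (h _ hP hQ) 0, congrFun (h _ hP hQ) 1⟩

theorem linearForm_pow_succ_dvd_sub {r : ℕ} {c d : F} (hn : (n.factorial : F) ≠ 0)
    (hab : ¬(a = 0 ∧ b = 0)) (hP : P.IsHomogeneous n) (hQ : Q.IsHomogeneous n)
    (hPQ : NoCommonRoot P Q) (hW : linearForm a b ^ r ∣ wronskian P Q)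
    (hcd : d * eval ![a, b] P = c * eval ![a, b] Q) :
    linearForm a b ^ (r + 1) ∣ C d * P - C c * Q := by
  have hhom : (C d * P - C c * Q).IsHomogeneous n := (hP.C_mul d).sub (hQ.C_mul c)
  have hdvd : linearForm a b ∣ C d * P - C c * Q :=
    linearForm_dvd_of_eval_eq_zero hab hhom (by simp [hcd])
  obtain ⟨g, hg, hgab, e, heq⟩ : ∃ g : MvPolynomial (Fin 2) F, g.IsHomogeneous n ∧
      eval ![a, b] g ≠ 0 ∧ ∃ e, wronskian (C d * P - C c * Q) g = e * wronskian P Q := by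
    by_cases hQab : eval ![a, b] Q = 0
    · have hPab : eval ![a, b] P ≠ 0 := fun hPab => hPQ.not_eval_eq_zero hab ⟨hPab, hQab⟩
      exact ⟨P, hP, hPab, C c, by simp only [wronskian, map_sub, pderiv_C_mul]; ring⟩
    · exact ⟨Q, hQ, hQab, C d, by simp only [wronskian, map_sub, pderiv_C_mul]; ring⟩
  exact linearForm_pow_succ_dvd_of_pow_dvd_wronskian hn hab hhom.totalDegree_le hg hdvd hgab
    (heq ▸ hW.mul_left e)

end Wronskian

section Ramification

variable {ι : Type*} [Fintype ι]

theorem isHomogeneous_prod_linearForm_pow (a b : ι → F) (r : ι → ℕ) :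
    (∏ i, linearForm (a i) (b i) ^ r i).IsHomogeneous (∑ i, r i) :=
  IsHomogeneous.prod _ _ _ fun i _ => by
    simpa only [one_mul] using (isHomogeneous_linearForm (a i) (b i)).pow (r i)

theorem eq_zero_of_linearForm_pow_dvd {a b : ι → F} {e : ι → ℕ} {f : MvPolynomial (Fin 2) F}
    (hab : ∀ i, ¬(a i = 0 ∧ b i = 0)) (hdist : ∀ i j, i ≠ j → a i * b j - a j * b i ≠ 0)
    (hdvd : ∀ i, linearForm (a i) (b i) ^ e i ∣ f) (hdeg : f.totalDegree < ∑ i, e i) : f = 0 := by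
  by_contra hf
  have hprod : ∏ i, linearForm (a i) (b i) ^ e i ∣ f :=
    Fintype.prod_dvd_of_isRelPrime
      (fun i j hij => (isRelPrime_linearForm (hab i) (hdist i j hij)).pow) hdvd
  have hle := totalDegree_le_of_dvd_of_isDomain hprod hf
  rw [(isHomogeneous_prod_linearForm_pow a b e).totalDegree
    (ne_zero_of_dvd_ne_zero hf hprod)] at hle
  exact hle.not_gt hdeg

/-- The morphism `[P : Q]` of the projective line has ramification divisor `∑ rᵢ [aᵢ : bᵢ]`,
that is, its Wronskian is a nonzero constant times a form with this divisor of zeros. -/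
def HasRamificationDivisor (a b : ι → F) (r : ι → ℕ) (P Q : MvPolynomial (Fin 2) F) : Prop :=
  ∃ k : Fˣ, wronskian P Q = (k : F) • ∏ i, linearForm (a i) (b i) ^ r i

namespace HasRamificationDivisor

variable {a b : ι → F} {r : ι → ℕ} {P Q : MvPolynomial (Fin 2) F}

theorem associated (h : HasRamificationDivisor a b r P Q) :
    Associated (∏ i, linearForm (a i) (b i) ^ r i) (wronskian P Q) := by
  obtain ⟨k, hk⟩ := h
  exact ⟨k.map (C : F →+* MvPolynomial (Fin 2) F).toMonoidHom, by
    rw [hk, smul_eq_C_mul, mul_comm]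
    rfl⟩

theorem linearForm_pow_dvd_wronskian (h : HasRamificationDivisor a b r P Q) (i : ι) :
    linearForm (a i) (b i) ^ r i ∣ wronskian P Q :=
  (Finset.dvd_prod_of_mem _ (Finset.mem_univ i)).trans h.associated.dvd

theorem wronskian_ne_zero (h : HasRamificationDivisor a b r P Q)
    (hab : ∀ i, ¬(a i = 0 ∧ b i = 0)) : wronskian P Q ≠ 0 :=
  h.associated.ne_zero_iff.1
    (Finset.prod_ne_zero_iff.2 fun i _ => pow_ne_zero _ (linearForm_ne_zero (hab i)))

theorem sum_eq (h : HasRamificationDivisor a b r P Q) (hab : ∀ i, ¬(a i = 0 ∧ b i = 0))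
    (hP : P.IsHomogeneous n) (hQ : Q.IsHomogeneous n) : ∑ i, r i = 2 * (n - 1) := by
  have hW := h.wronskian_ne_zero hab
  obtain ⟨k, hk⟩ := h
  have hW' : (wronskian P Q).IsHomogeneous (∑ i, r i) := by
    rw [hk, smul_eq_C_mul]
    exact (isHomogeneous_prod_linearForm_pow a b r).C_mul _
  rw [hW'.inj_right (isHomogeneous_wronskian hP hQ) hW, two_mul]

theorem isRelPrime (h : HasRamificationDivisor a b r P Q) (hab : ∀ i, ¬(a i = 0 ∧ b i = 0))
    (hPQ : NoCommonRoot P Q) : IsRelPrime P Q := by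
  refine WfDvdMonoid.isRelPrime_of_no_irreducible_factors ?_ fun p hp hpP hpQ => ?_
  · rintro ⟨rfl, rfl⟩
    exact h.wronskian_ne_zero hab (by simp [wronskian])
  obtain ⟨i, -, hi⟩ := hp.prime.exists_mem_finset_dvd
    ((dvd_wronskian hpP hpQ).trans h.associated.symm.dvd)
  have hdvd : linearForm (a i) (b i) ∣ p :=
    (hp.associated_of_dvd (prime_linearForm (hab i)).irreducible (hp.prime.dvd_of_dvd_pow hi)).dvd'
  exact hPQ.not_eval_eq_zero (hab i) ⟨eval_eq_zero_of_linearForm_dvd (hdvd.trans hpP),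
    eval_eq_zero_of_linearForm_dvd (hdvd.trans hpQ)⟩

end HasRamificationDivisor

theorem exists_units_smul_eq_of_hasRamificationDivisor {a b c d : ι → F} {r : ι → ℕ}
    {P Q P' Q' : MvPolynomial (Fin 2) F} (hn : (n.factorial : F) ≠ 0) (hι : 3 ≤ Fintype.card ι)
    (hab : ∀ i, ¬(a i = 0 ∧ b i = 0)) (hdist : ∀ i j, i ≠ j → a i * b j - a j * b i ≠ 0)
    (hcd : ∀ i, ¬(c i = 0 ∧ d i = 0))
    (hP : P.IsHomogeneous n) (hQ : Q.IsHomogeneous n) (hPQ : NoCommonRoot P Q)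
    (hram : HasRamificationDivisor a b r P Q)
    (hval : ∀ i, d i * eval ![a i, b i] P = c i * eval ![a i, b i] Q)
    (hP' : P'.IsHomogeneous n) (hQ' : Q'.IsHomogeneous n) (hPQ' : NoCommonRoot P' Q')
    (hram' : HasRamificationDivisor a b r P' Q')
    (hval' : ∀ i, d i * eval ![a i, b i] P' = c i * eval ![a i, b i] Q') :
    ∃ k : Fˣ, P' = (k : F) • P ∧ Q' = (k : F) • Q := by
  refine exists_units_smul_eq_of_mul_eq_mul (hram.isRelPrime hab hPQ) (hram'.isRelPrime hab hPQ')
    (sub_eq_zero.1 (eq_zero_of_linearForm_pow_dvd (e := fun i => r i + 1) hab hdist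
      (fun i => ?_) ?_))
  · exact dvd_mul_sub_mul_of_dvd_sub
      ((not_and_or.1 (hcd i)).imp (fun hc => (IsUnit.mk0 _ hc).map C)
        fun hd => (IsUnit.mk0 _ hd).map C)
      (linearForm_pow_succ_dvd_sub hn (hab i) hP hQ hPQ
        (hram.linearForm_pow_dvd_wronskian i) (hval i))
      (linearForm_pow_succ_dvd_sub hn (hab i) hP' hQ' hPQ'
        (hram'.linearForm_pow_dvd_wronskian i) (hval' i))
  · have hdeg := ((hP.mul hQ').sub (hP'.mul hQ)).totalDegree_le
    have hsum : ∑ i, (r i + 1) = 2 * (n - 1) + Fintype.card ι := by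
      simp [Finset.sum_add_distrib, hram.sum_eq hab hP hQ]
    omega

end Ramification

end CGR

theorem finitely_many_maps_with_given_ramification_divisor_and_critical_values_general
    {F ι : Type*} [Field F] [Fintype ι] {n : ℕ} (hn : (n.factorial : F) ≠ 0)
    (hι : 3 ≤ Fintype.card ι) {a b : ι → F} (hQ : ∀ i, ¬(a i = 0 ∧ b i = 0))
    (hQdist : ∀ i j, i ≠ j → a i * b j - a j * b i ≠ 0)
    (r : ι → ℕ) {c d : ι → F} (hP : ∀ i, ¬(c i = 0 ∧ d i = 0)) :
    ∃ T : Set (MvPolynomial (Fin 2) F × MvPolynomial (Fin 2) F), T.Subsingleton ∧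
      ∀ P Q : MvPolynomial (Fin 2) F,
        P.IsHomogeneous n → Q.IsHomogeneous n → NoCommonRoot P Q →
        HasRamificationDivisor a b r P Q →
        (∀ i, d i * MvPolynomial.eval ![a i, b i] P = c i * MvPolynomial.eval ![a i, b i] Q) →
        ∃ pq ∈ T, ∃ k : Fˣ, P = (k : F) • pq.1 ∧ Q = (k : F) • pq.2 := by
  by_cases hex : ∃ P Q : MvPolynomial (Fin 2) F, P.IsHomogeneous n ∧ Q.IsHomogeneous n ∧
      NoCommonRoot P Q ∧ HasRamificationDivisor a b r P Q ∧
      ∀ i, d i * MvPolynomial.eval ![a i, b i] P = c i * MvPolynomial.eval ![a i, b i] Q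
  · obtain ⟨P₀, Q₀, hP₀, hQ₀, hPQ₀, hram₀, hval₀⟩ := hex
    exact ⟨{(P₀, Q₀)}, Set.subsingleton_singleton, fun P Q hP' hQ' hPQ hram hval =>
      ⟨_, rfl, exists_units_smul_eq_of_hasRamificationDivisor hn hι hQ hQdist hP
        hP₀ hQ₀ hPQ₀ hram₀ hval₀ hP' hQ' hPQ hram hval⟩⟩
  · exact ⟨∅, Set.subsingleton_empty, fun P Q hP' hQ' hPQ hram hval =>
      (hex ⟨P, Q, hP', hQ', hPQ, hram, hval⟩).elim⟩

theorem finitely_many_maps_with_given_ramification_divisor_and_critical_values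
    (L : Type*) [Field L] [IsAlgClosed L] [CharZero L]
    (n : ℕ) (hn : 1 < n) (m : ℕ) (hm : 3 ≤ m)
    -- the distinct points `Qᵢ = [aᵢ : bᵢ]` of the divisor `D`
    (a b : Fin m → L) (hQ : ∀ i, ¬(a i = 0 ∧ b i = 0))
    (hQdist : ∀ i j, i ≠ j → a i * b j - a j * b i ≠ 0)
    -- the multiplicities `eᵢ − 1` of `D`, with `eᵢ ≥ 2`
    (e : Fin m → ℕ) (he : ∀ i, 2 ≤ e i)
    -- the target points `Pᵢ = [cᵢ : dᵢ]`
    (c d : Fin m → L) (hP : ∀ i, ¬(c i = 0 ∧ d i = 0)) :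
    ∃ T : Set (MvPolynomial (Fin 2) L × MvPolynomial (Fin 2) L), T.Finite ∧
      ∀ P Q : MvPolynomial (Fin 2) L,
        P.IsHomogeneous n → Q.IsHomogeneous n → NoCommonRoot P Q →
        -- the ramification divisor of `φ` equals `D`
        (∃ k : Lˣ, wronskian P Q =
          (k : L) • ∏ i, (MvPolynomial.C (b i) * MvPolynomial.X 0 -
            MvPolynomial.C (a i) * MvPolynomial.X 1) ^ (e i - 1)) →
        -- `φ(Qᵢ) = Pᵢ` for all `i`
        (∀ i, d i * MvPolynomial.eval ![a i, b i] P =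
              c i * MvPolynomial.eval ![a i, b i] Q) →
        ∃ pq ∈ T, ∃ k : Lˣ, P = (k : L) • pq.1 ∧ Q = (k : L) • pq.2 := by
  obtain ⟨T, hT, h⟩ :=
    finitely_many_maps_with_given_ramification_divisor_and_critical_values_general
      (Nat.cast_ne_zero.2 n.factorial_ne_zero) (hm.trans_eq (Fintype.card_fin m).symm) hQ hQdist
      (fun i => e i - 1) hP
  exact ⟨T, hT.finite, h⟩

end
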